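/- Let k be a field and Λ a finite-dimensional k-algebra whose semisimple quotient Λ/rad(Λ) is a separable k-algebra. For every natural number n, the following are equivalent: (a) Ext^m_Λ(M, N) = 0 for all left Λ-modules M, N and all m > n (i.e. the global dimension of Λ is at most n); (b) Ext^m_{Λ⊗_k Λᵒᵖ}(Λ, X) = 0 for all Λ-bimodules X and all m > n (i.e. the projective dimension of Λ as a Λ-bimodule is at most n). In particular the global dimension of Λ equals the projective dimension of Λ as a Λ-bimodule. -/

import Mathlib

/-!
STATEMENT 1: Let `k` be a field and `Λ` a finite-dimensional `k`-algebra whose semisimple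
quotient `Λ/rad(Λ)` is a separable `k`-algebra.  For every natural number `n`, the following
are equivalent:
(a) `Ext^m_Λ(M, N) = 0` for all left `Λ`-modules `M`, `N` and all `m > n` (i.e. the global
    dimension of `Λ` is at most `n`);
(b) `Ext^m_{Λ⊗ₖΛᵒᵖ}(Λ, X) = 0` for all `Λ`-bimodules `X` and all `m > n` (i.e. the projective
    dimension of `Λ` as a `Λ`-bimodule is at most `n`).
In particular the global dimension of `Λ` equals the projective dimension of `Λ` as a
`Λ`-bimodule.

The hypothesis that `Λ/rad(Λ)` is separable is expressed by the existence of a surjective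
`k`-algebra map `f : Λ → E` whose kernel is the Jacobson radical of `Λ`, such that `E` is
projective as a left `E ⊗[k] Eᵐᵒᵖ`-module.  A `Λ`-bimodule is a left `Λ ⊗[k] Λᵐᵒᵖ`-module,
and "Ext = 0" is expressed by `Subsingleton`.
-/

open CategoryTheory
open scoped TensorProduct

universe u

/-- The module structure over the enveloping algebra `Λ ⊗[k] Λᵐᵒᵖ` on `Λ` itself
(the regular bimodule). -/
noncomputable def envModuleSelf (k : Type u) [Field k] (Λ : Type u) [Ring Λ] [Algebra k Λ] :
    Module (Λ ⊗[k] Λᵐᵒᵖ) Λ :=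
  TensorProduct.Algebra.module

/-!
`Ext_Λ(M, N)` is `Ext_{Λ ⊗ Λᵐᵒᵖ}(Λ, Hom_k(M, N))`: the exact functor `Hom_k(M, -)` satisfies
`Hom_Λ(M, N) = Hom_{Λ ⊗ Λᵐᵒᵖ}(Λ, Hom_k(M, N))`, and it sends injective `Λ`-modules to bimodules
acyclic for the regular bimodule, because an injective module `J` is a retract of `Hom_k(Λ, J)`.
This gives (b) ⇒ (a).

For (a) ⇒ (b), a `Λ`-`E`-bimodule `Y` with `E` separable is a retract of `Hom_k(E, Y)`: the map
`y ↦ (e ↦ y e)` is split by `φ ↦ ∑ φ(eᵢ) eᵢ'` for a separability idempotent `∑ eᵢ ⊗ eᵢ'`. Hence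
`Ext(Λ, Y)` is a retract of `Ext_Λ(E, Y)`. As `Λ ⊗ Λᵐᵒᵖ → Λ ⊗ Eᵐᵒᵖ` is surjective with nilpotent
kernel, every `Λ`-bimodule is an iterated extension of such `Y`.
-/

section ExtLemmas

universe v v' w w' u'
open Limits Abelian

section
variable {C : Type u} [Category.{v} C] [Abelian C]

lemma subsingleton_ext_iff_subsingleton_abelianExt (k : Type*) [Ring k] [Linear k C]
    [EnoughProjectives C] [HasExt.{w} C] (X Y : C) (n : ℕ) :
    Subsingleton (((Ext k C (n + 1)).obj (.op X)).obj Y) ↔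
      Subsingleton (Abelian.Ext.{w} X Y (n + 1)) := by
  let P := ProjectiveResolution.of X
  have cocycles_are_coboundaries :
      Subsingleton (((Ext k C (n + 1)).obj (.op X)).obj Y) ↔
        ∀ f : P.complex.X (n + 1) ⟶ Y, P.complex.d (n + 2) (n + 1) ≫ f = 0 →
          ∃ g : P.complex.X n ⟶ Y, P.complex.d (n + 1) n ≫ g = f := by
    rw [← ModuleCat.isZero_iff_subsingleton, (P.isoExt (n + 1) Y).isZero_iff,
      ← HomologicalComplex.exactAt_iff_isZero_homology,
      HomologicalComplex.exactAt_iff' _ n (n + 1) (n + 2) (by simp) (by simp),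
      ShortComplex.moduleCat_exact_iff]
    rfl
  rw [cocycles_are_coboundaries]
  constructor
  · refine fun h ↦ subsingleton_of_forall_eq 0 fun x ↦ ?_
    obtain ⟨f, hf, rfl⟩ := P.extMk_surjective x (n + 2) rfl
    exact (P.extMk_eq_zero_iff f (n + 2) rfl hf n rfl).2 (h f hf)
  · exact fun h f hf ↦ (P.extMk_eq_zero_iff f (n + 2) rfl hf n rfl).1 (Subsingleton.elim _ _)

lemma subsingleton_ext_of_retract [HasExt.{w} C] (X : C) {Y Z : C} (r : Retract Y Z) (n : ℕ)
    [Subsingleton (Abelian.Ext.{w} X Z n)] : Subsingleton (Abelian.Ext.{w} X Y n) := by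
  refine subsingleton_of_forall_eq 0 fun x ↦ ?_
  calc x = (x.comp (Ext.mk₀ r.i) (add_zero n)).comp (Ext.mk₀ r.r) (add_zero n) := by simp
    _ = (0 : Ext X Z n).comp (Ext.mk₀ r.r) (add_zero n) := by congr 1; exact Subsingleton.elim _ _
    _ = 0 := Ext.zero_comp ..

lemma subsingleton_ext_of_shortExact [HasExt.{w} C] (X : C) {S : ShortComplex C}
    (hS : S.ShortExact) (n : ℕ) [Subsingleton (Abelian.Ext.{w} X S.X₁ n)]
    [Subsingleton (Abelian.Ext.{w} X S.X₃ n)] : Subsingleton (Abelian.Ext.{w} X S.X₂ n) := by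
  refine subsingleton_of_forall_eq 0 fun x ↦ ?_
  obtain ⟨y, rfl⟩ := Ext.covariant_sequence_exact₂ X hS x (Subsingleton.elim _ _)
  rw [Subsingleton.elim y 0, Ext.zero_comp]
end

section
variable {C : Type u} [Category.{v} C] [Abelian C] {D : Type u'} [Category.{v'} D] [Abelian D]
variable (F : C ⥤ D) [F.Additive] [PreservesFiniteLimits F] [PreservesFiniteColimits F]
  [HasExt.{w} C] [HasExt.{w'} D]

/-- The map `Extⁿ(M, Y) → Extⁿ(X, F(Y))` induced by an exact functor `F` and a map
`η : X ⟶ F(M)`. -/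
noncomputable def extMapPrecomp {X : D} {M : C} (η : X ⟶ F.obj M) (Y : C) (n : ℕ) :
    Ext.{w} M Y n →+ Ext.{w'} X (F.obj Y) n :=
  ((Ext.mk₀ η).precomp (F.obj Y) (zero_add n)).comp (F.mapExtAddHom M Y n)

@[simp]
lemma extMapPrecomp_apply {X : D} {M : C} (η : X ⟶ F.obj M) {Y : C} {n : ℕ} (x : Ext.{w} M Y n) :
    (extMapPrecomp F η Y n x : Ext.{w'} X (F.obj Y) n) =
      (Ext.mk₀ η).comp (x.mapExactFunctor F) (zero_add n) := rfl

lemma extMapPrecomp_comp {X : D} {M : C} (η : X ⟶ F.obj M) {Y Z : C} {m n p : ℕ}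
    (x : Ext.{w} M Y m) (y : Ext.{w} Y Z n) (h : m + n = p) :
    (extMapPrecomp F η Z p (x.comp y h) : Ext.{w'} X (F.obj Z) p) =
      (extMapPrecomp F η Y m x).comp (y.mapExactFunctor F) h := by
  simp only [extMapPrecomp_apply, Ext.mapExactFunctor_comp]
  exact (Ext.comp_assoc _ _ _ (zero_add m) h (by lia)).symm

lemma extMapPrecomp_bijective [EnoughInjectives C] {X : D} {M : C} (η : X ⟶ F.obj M)
    (universal : ∀ Y : C, Function.Bijective fun f : M ⟶ Y ↦ η ≫ F.map f)
    (acyclic : ∀ (I : C) [Injective I] (n : ℕ), Subsingleton (Ext.{w'} X (F.obj I) (n + 1)))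
    (Y : C) (n : ℕ) : Function.Bijective (extMapPrecomp F η Y n : Ext.{w} M Y n → _) := by
  induction n generalizing Y with
  | zero =>
    have h : (extMapPrecomp F η Y 0 : Ext.{w} M Y 0 → _) =
        Ext.mk₀ ∘ (fun f : M ⟶ Y ↦ η ≫ F.map f) ∘ Ext.homEquiv₀ := by
      ext x
      simp [Ext.mapExactFunctor₀]
    rw [h]
    exact (Ext.mk₀_bijective _ _).comp ((universal Y).comp Ext.homEquiv₀.bijective)
  | succ n hn =>
    let I : InjectivePresentation Y := Classical.arbitrary _
    let S := ShortComplex.mk _ _ (cokernel.condition I.f)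
    have hI : Injective S.X₂ := I.injective
    have hS : S.ShortExact := { exact := ShortComplex.exact_cokernel I.f }
    have comp_g (x : Ext.{w} M S.X₂ n) :
        extMapPrecomp F η S.X₃ n (x.comp (Ext.mk₀ S.g) (add_zero n)) =
          (extMapPrecomp F η S.X₂ n x).comp (Ext.mk₀ (S.map F).g) (add_zero n) := by
      rw [extMapPrecomp_comp, Ext.mapExactFunctor_mk₀]; rfl
    have comp_extClass (x : Ext.{w} M S.X₃ n) :
        extMapPrecomp F η S.X₁ (n + 1) (x.comp hS.extClass rfl) =
          (extMapPrecomp F η S.X₃ n x).comp (hS.map F).extClass rfl := by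
      rw [extMapPrecomp_comp, Ext.mapExactFunctor_extClass]; rfl
    exact AddMonoidHom.bijective_of_surjective_of_bijective_of_right_exact _ _ _ _
      (extMapPrecomp F η S.X₂ n) (extMapPrecomp F η S.X₃ n) (extMapPrecomp F η S.X₁ (n + 1))
      (AddMonoidHom.ext fun x ↦ (comp_g x).symm) (AddMonoidHom.ext fun x ↦ (comp_extClass x).symm)
      ((ShortComplex.ab_exact_iff_function_exact _).1
        (Ext.covariant_sequence_exact₃' M hS n (n + 1) rfl))
      ((ShortComplex.ab_exact_iff_function_exact _).1
        (Ext.covariant_sequence_exact₃' X (hS.map F) n (n + 1) rfl))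
      (hn _).surjective (hn _)
      (fun x ↦ Ext.covariant_sequence_exact₁ M hS x (Ext.eq_zero_of_injective _) rfl)
      (fun y ↦ Ext.covariant_sequence_exact₁ X (hS.map F) y
        ((acyclic S.X₂ n).elim _ _) rfl)
end

end ExtLemmas

section Adjunction

universe v v' w w' u'
open Limits Abelian

/-- An injective object is a retract of its image under the monad of an adjunction whose left
adjoint is faithful. -/
noncomputable def retractUnitOfInjective {C : Type u} [Category.{v} C] {D : Type u'}
    [Category.{v'} D] {L : C ⥤ D} {F : D ⥤ C} (adj : L ⊣ F) [L.Faithful] (J : C) [Injective J] :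
    Retract J (F.obj (L.obj J)) where
  i := adj.unit.app J
  r := Injective.factorThru (𝟙 J) (adj.unit.app J)

variable {C : Type u} [Category.{v} C] [Abelian C] {D : Type u'} [Category.{v'} D] [Abelian D]
  [HasExt.{w} C] [HasExt.{w'} D] {L : D ⥤ C} {F : C ⥤ D}

lemma extMapPrecomp_unit_bijective (adj : L ⊣ F) [F.Additive] [PreservesFiniteLimits F]
    [PreservesFiniteColimits F] [L.PreservesMonomorphisms] [EnoughInjectives C]
    (X : D) (Y : C) (n : ℕ) :
    Function.Bijective (extMapPrecomp F (adj.unit.app X) Y n : Ext.{w} _ Y n → _) := by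
  have := L.preservesInjectiveObjects_of_adjunction_of_preservesMonomorphisms adj
  refine extMapPrecomp_bijective F _ (fun Z ↦ ?_) (fun I _ n ↦ ?_) Y n
  · exact (funext (adj.homEquiv_unit X Z) : ⇑(adj.homEquiv X Z) = _) ▸
      (adj.homEquiv X Z).bijective
  · have := F.injective_obj I
    exact Ext.subsingleton_of_injective _ _ _

lemma subsingleton_ext_of_projective_leftAdjoint_obj (adj : L ⊣ F) [F.Additive]
    [PreservesFiniteLimits F] [PreservesFiniteColimits F] [L.PreservesMonomorphisms]
    [EnoughInjectives C] (X : D) [Projective (L.obj X)] (Y : C) (n : ℕ) :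
    Subsingleton (Ext.{w'} X (F.obj Y) (n + 1)) :=
  have := Ext.subsingleton_of_projective (L.obj X) Y n
  have h : Function.Surjective
      (extMapPrecomp F (adj.unit.app X) Y (n + 1) : Ext.{w} _ Y (n + 1) → Ext.{w'} _ _ _) :=
    (extMapPrecomp_unit_bijective adj X Y (n + 1)).surjective
  h.subsingleton

end Adjunction

section Coextension

open Limits
variable {R S : Type u} [Ring R] [Ring S] (φ : R →+* S)

instance coextendScalars_additive : (ModuleCat.coextendScalars.{u, u, u} φ).Additive :=
  (ModuleCat.restrictCoextendScalarsAdj φ).right_adjoint_additive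

variable [Projective ((ModuleCat.restrictScalars φ).obj (ModuleCat.of S S))]

lemma coextendScalars_preservesEpimorphisms :
    (ModuleCat.coextendScalars.{u, u, u} φ).PreservesEpimorphisms where
  preserves {M N} g _ := (ModuleCat.epi_iff_surjective _).2 fun h ↦ by
    let lift := Projective.factorThru (ModuleCat.ofHom (ModuleCat.CoextendScalars.equiv φ N h)) g
    refine ⟨(ModuleCat.CoextendScalars.equiv φ M).symm lift.hom, ?_⟩
    ext s
    exact congr($(Projective.factorThru_comp _ g) s)

lemma coextendScalars_preservesFiniteColimits :
    PreservesFiniteColimits (ModuleCat.coextendScalars.{u, u, u} φ) := by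
  have := coextendScalars_preservesEpimorphisms φ
  have := (ModuleCat.coextendScalars.{u, u, u} φ).preservesHomology_of_preservesEpis_and_kernels
  exact Functor.preservesFiniteColimits_of_preservesHomology _

lemma subsingleton_ext_coextendScalars (X : ModuleCat.{u} S)
    [Projective ((ModuleCat.restrictScalars φ).obj X)] (Y : ModuleCat.{u} R) (n : ℕ) :
    Subsingleton (Abelian.Ext.{u} X ((ModuleCat.coextendScalars φ).obj Y) (n + 1)) :=
  have := coextendScalars_preservesFiniteColimits φ
  subsingleton_ext_of_projective_leftAdjoint_obj (ModuleCat.restrictCoextendScalarsAdj φ) X Y n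

end Coextension

section Bimodule

section Tmul

variable {k A B : Type*} [CommRing k] [Ring A] [Algebra k A] [Ring B] [Algebra k B]
  {X Y : Type*} [AddCommGroup X] [AddCommGroup Y] [Module (A ⊗[k] B) X] [Module (A ⊗[k] B) Y]

/-- An additive map between `A ⊗[k] B`-modules that commutes with pure tensors, as a linear map. -/
def linearMapOfMapTmulSMul (f : X →+ Y)
    (map_tmul_smul : ∀ (a : A) (b : B) (x : X), f ((a ⊗ₜ[k] b) • x) = (a ⊗ₜ[k] b) • f x) :
    X →ₗ[A ⊗[k] B] Y where
  __ := f
  map_smul' t x := by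
    induction t with
    | zero => simp
    | tmul a b => exact map_tmul_smul a b x
    | add s t hs ht => simp_all [add_smul]

end Tmul

section LinearMap

variable (k : Type*) [CommRing k] {Λ Γ : Type*} [Ring Λ] [Algebra k Λ] [Ring Γ] [Algebra k Γ]
  (M N : Type*) [AddCommGroup M] [Module k M] [Module Γ M] [IsScalarTower k Γ M]
  [AddCommGroup N] [Module k N] [Module Λ N] [IsScalarTower k Λ N]

/-- The `Λ`-`Γ`-bimodule structure on `Hom_k(M, N)` for a left `Γ`-module `M` and a left
`Λ`-module `N`: `(a f b)(m) = a f(b m)`. -/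
@[reducible]
noncomputable def linearMapBimodule : Module (Λ ⊗[k] Γᵐᵒᵖ) (M →ₗ[k] N) :=
  letI : Module Γᵐᵒᵖ (M →ₗ[k] N) := inferInstanceAs (Module Γᵈᵐᵃ (M →ₗ[k] N))
  haveI : SMulCommClass Λ Γᵐᵒᵖ (M →ₗ[k] N) := ⟨fun _ _ _ ↦ rfl⟩
  haveI : IsScalarTower k Γᵐᵒᵖ (M →ₗ[k] N) :=
    ⟨fun c b f ↦ LinearMap.ext fun m ↦
      (congrArg f (smul_assoc c b.unop m)).trans (f.map_smul c (b.unop • m))⟩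
  TensorProduct.Algebra.module

end LinearMap

section Functor

variable (k : Type*) [CommRing k] {Λ Γ : Type u} [Ring Λ] [Algebra k Λ] [Ring Γ] [Algebra k Γ]

/-- The `k`-module underlying a module over a `k`-algebra. -/
abbrev moduleOverBase (N : ModuleCat.{u} Λ) : Module k N :=
  Module.compHom N (algebraMap k Λ)

attribute [local instance] moduleOverBase linearMapBimodule

lemma isScalarTower_moduleOverBase (N : ModuleCat.{u} Λ) : IsScalarTower k Λ N :=
  .of_compHom k Λ N

attribute [local instance] isScalarTower_moduleOverBase

/-- The functor `Hom_k(M, -)` from `Λ`-modules to `Λ`-`Γ`-bimodules. -/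
noncomputable def homBimodule (M : ModuleCat.{u} Γ) :
    ModuleCat.{u} Λ ⥤ ModuleCat.{u} (Λ ⊗[k] Γᵐᵒᵖ) where
  obj N := ModuleCat.of _ (M →ₗ[k] N)
  map {N N'} g := ModuleCat.ofHom <| linearMapOfMapTmulSMul
    ((g.hom.restrictScalars k).compRight k).toAddMonoidHom
    fun a b h ↦ LinearMap.ext fun m ↦ g.hom.map_smul a (h (b.unop • m))

variable (M : ModuleCat.{u} Γ)

instance : (homBimodule k M (Λ := Λ)).Additive where
  map_add := rfl

variable [Module.Projective k M]

lemma homBimodule_map_exact (S : ShortComplex (ModuleCat.{u} Λ)) (hS : S.Exact) :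
    (S.map (homBimodule k M)).Exact := by
  rw [ShortComplex.moduleCat_exact_iff] at hS ⊢
  intro (h : M →ₗ[k] S.X₂) hh
  have g_comp_h (m : M) : S.g (h m) = 0 := DFunLike.congr_fun (F := M →ₗ[k] S.X₃) hh m
  obtain ⟨l, hl⟩ := Module.projective_lifting_property (S.f.hom.restrictScalars k).rangeRestrict
    (h.codRestrict _ fun m ↦ hS (h m) (g_comp_h m)) (LinearMap.surjective_rangeRestrict _)
  exact ⟨l, LinearMap.ext fun m ↦ congr(($hl m).1)⟩

lemma homBimodule_preserves_finite_limits_and_colimits :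
    Limits.PreservesFiniteLimits (homBimodule k M (Λ := Λ)) ∧
      Limits.PreservesFiniteColimits (homBimodule k M (Λ := Λ)) :=
  (homBimodule k M).exact_tfae.out 1 3 |>.1 (homBimodule_map_exact k M)

instance : Limits.PreservesFiniteLimits (homBimodule k M (Λ := Λ)) :=
  (homBimodule_preserves_finite_limits_and_colimits k M).1

instance : Limits.PreservesFiniteColimits (homBimodule k M (Λ := Λ)) :=
  (homBimodule_preserves_finite_limits_and_colimits k M).2

end Functor

section Acyclic

variable (k : Type u) [CommRing k] {Λ Γ : Type u} [Ring Λ] [Algebra k Λ] [Ring Γ] [Algebra k Γ]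

attribute [local instance] moduleOverBase linearMapBimodule isScalarTower_moduleOverBase

variable (Λ Γ) in
/-- The ring homomorphism along which a `Λ`-`Γ`-bimodule becomes a right `Γ`-module. -/
noncomputable abbrev rightScalars : Γᵐᵒᵖ →+* Λ ⊗[k] Γᵐᵒᵖ :=
  (Algebra.TensorProduct.includeRight : Γᵐᵒᵖ →ₐ[k] Λ ⊗[k] Γᵐᵒᵖ).toRingHom

instance projective_restrictScalars_rightScalars [Module.Projective k Λ] : Projective
    ((ModuleCat.restrictScalars (rightScalars k Λ Γ)).obj (.of _ (Λ ⊗[k] Γᵐᵒᵖ))) := by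
  let N := (ModuleCat.restrictScalars (rightScalars k Λ Γ)).obj (.of _ (Λ ⊗[k] Γᵐᵒᵖ))
  let comm : Γᵐᵒᵖ ⊗[k] Λ ≃+ N := (TensorProduct.comm k Γᵐᵒᵖ Λ).toAddEquiv
  have comm_smul (b : Γᵐᵒᵖ) (x : Γᵐᵒᵖ ⊗[k] Λ) : comm (b • x) = b • comm x := by
    induction x with
    | zero => simp only [smul_zero, map_zero]
    | tmul c a =>
      change a ⊗ₜ[k] (b * c) = (1 ⊗ₜ[k] b) * (a ⊗ₜ[k] c)
      rw [Algebra.TensorProduct.tmul_mul_tmul, one_mul]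
    | add x y hx hy => simp only [smul_add, map_add, hx, hy]
  have : Module.Projective Γᵐᵒᵖ N :=
    .of_equiv ({ comm with map_smul' := comm_smul } : _ ≃ₗ[Γᵐᵒᵖ] N)
  exact (IsProjective.iff_projective N).1 this

variable (M : ModuleCat.{u} Γ) (N : ModuleCat.{u} Λ)

/-- The bimodule of `Γᵐᵒᵖ`-linear maps from `Λ ⊗[k] Γᵐᵒᵖ` to `Hom_k(M, N)`. -/
noncomputable abbrev coextendHom :=
  (ModuleCat.coextendScalars (rightScalars k Λ Γ)).obj
    ((ModuleCat.restrictScalars (rightScalars k Λ Γ)).obj ((homBimodule k M).obj N))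

/-- The `k`-coextension of the `k`-module underlying `N`, that is, `Hom_k(Λ, N)`. -/
noncomputable abbrev coextendBase :=
  (ModuleCat.coextendScalars (algebraMap k Λ)).obj
    ((ModuleCat.restrictScalars (algebraMap k Λ)).obj N)

variable {k M N}

namespace coextendHom

/-- An element of `coextendHom k M N` as an additive map. -/
noncomputable def eval (h : coextendHom k M N) : (Λ ⊗[k] Γᵐᵒᵖ) →+ M →ₗ[k] N :=
  (ModuleCat.CoextendScalars.equiv _ _ h).toAddMonoidHom

lemma eval_tmul (h : coextendHom k M N) (a : Λ) (b : Γᵐᵒᵖ) (m : M) :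
    eval h (a ⊗ₜ[k] b) m = eval h (a ⊗ₜ[k] 1) (b.unop • m) := by
  have h_smul : h (((1 : Λ) ⊗ₜ[k] b) * (a ⊗ₜ[k] (1 : Γᵐᵒᵖ))) = _ :=
    (ModuleCat.CoextendScalars.equiv _ _ h).map_smul b (a ⊗ₜ[k] (1 : Γᵐᵒᵖ))
  rw [Algebra.TensorProduct.tmul_mul_tmul, one_mul, mul_one] at h_smul
  exact (DFunLike.congr_fun (F := M →ₗ[k] N) h_smul m).trans (one_smul Λ _)

lemma eval_smul_tmul_one (h : coextendHom k M N) (c : k) (a : Λ) (m : M) :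
    eval h ((c • a) ⊗ₜ[k] 1) m = c • eval h (a ⊗ₜ[k] 1) m := by
  rw [TensorProduct.smul_tmul, eval_tmul, MulOpposite.unop_smul, MulOpposite.unop_one,
    smul_one_smul, map_smul]

/-- The map `a ↦ h(a ⊗ 1)(m)` of `Hom_k(Λ, N)`. -/
noncomputable def evalLeft (h : coextendHom k M N) (m : M) : coextendBase k N :=
  (ModuleCat.CoextendScalars.equiv _ _).symm
    { toFun (a : Λ) := eval h (a ⊗ₜ[k] 1) m
      map_add' (a a' : Λ) :=
        (congrArg (eval h · m) (TensorProduct.add_tmul a a' (1 : Γᵐᵒᵖ))).trans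
          congr($(map_add (eval h) (a ⊗ₜ 1) (a' ⊗ₜ 1)) m)
      map_smul' c (a : Λ) := by
        refine Eq.trans ?_ (eval_smul_tmul_one h c a m)
        rw [Algebra.smul_def]
        rfl }

lemma evalLeft_tmul_smul (a : Λ) (b : Γᵐᵒᵖ) (h : coextendHom k M N) (m : M) :
    evalLeft ((a ⊗ₜ[k] b) • h) m = a • evalLeft h (b.unop • m) := by
  ext (x : Λ)
  refine Eq.trans ?_ (eval_tmul h (x * a) b m)
  refine congr(eval h $(?_) m)
  rw [Algebra.TensorProduct.tmul_mul_tmul, one_mul]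

lemma evalLeft_smul (h : coextendHom k M N) (c : k) (m : M) :
    evalLeft h (c • m) = algebraMap k Λ c • evalLeft h m := by
  have h₁ := evalLeft_tmul_smul (algebraMap k Λ c) 1 h m
  have h₂ := evalLeft_tmul_smul 1 (algebraMap k Γᵐᵒᵖ c) h m
  rw [Algebra.TensorProduct.tmul_one_eq_one_tmul, h₂] at h₁
  simpa using h₁

end coextendHom

/-- The map `h ↦ (m ↦ (a ↦ h(a ⊗ 1)(m)))` to `Hom_k(M, Hom_k(Λ, N))`. -/
noncomputable def coextendToHom :
    coextendHom k M N ⟶ (homBimodule k M).obj (coextendBase k N) :=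
  ModuleCat.ofHom <| linearMapOfMapTmulSMul
    { toFun h :=
      { toFun := coextendHom.evalLeft h
        map_add' m m' := by
          ext (x : Λ)
          exact map_add (coextendHom.eval h (x ⊗ₜ[k] 1)) m m'
        map_smul' := coextendHom.evalLeft_smul h }
      map_zero' := rfl
      map_add' _ _ := rfl }
    fun a b h ↦ LinearMap.ext fun m ↦ coextendHom.evalLeft_tmul_smul a b h m

lemma unit_comp_coextendToHom :
    (ModuleCat.restrictCoextendScalarsAdj (rightScalars k Λ Γ)).unit.app
        ((homBimodule k M).obj N) ≫ coextendToHom =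
      (homBimodule k M).map
        ((ModuleCat.restrictCoextendScalarsAdj (algebraMap k Λ)).unit.app N) := by
  ext (f : M →ₗ[k] N)
  refine LinearMap.ext fun m ↦ ?_
  ext (x : Λ)
  change x • f ((1 : Γ) • m) = x • f m
  rw [one_smul]

variable (k M) in
lemma subsingleton_ext_homBimodule_of_injective [Module.Projective k Λ]
    (X : ModuleCat.{u} (Λ ⊗[k] Γᵐᵒᵖ))
    [Projective ((ModuleCat.restrictScalars (rightScalars k Λ Γ)).obj X)]
    (J : ModuleCat.{u} Λ) [Injective J] (n : ℕ) :
    Subsingleton (Abelian.Ext.{u} X ((homBimodule k M).obj J) (n + 1)) := by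
  let s := retractUnitOfInjective (ModuleCat.restrictCoextendScalarsAdj (algebraMap k Λ)) J
  let r : Retract ((homBimodule k M).obj J) (coextendHom k M J) :=
    { i := (ModuleCat.restrictCoextendScalarsAdj (rightScalars k Λ Γ)).unit.app _
      r := coextendToHom ≫ (homBimodule k M).map s.r
      retract := by
        refine (Category.assoc _ _ _).symm.trans ?_
        refine congr($unit_comp_coextendToHom ≫ _).trans ?_
        exact (s.map (homBimodule k M)).retract }
  have := subsingleton_ext_coextendScalars (rightScalars k Λ Γ) X
    ((ModuleCat.restrictScalars (rightScalars k Λ Γ)).obj ((homBimodule k M).obj J)) n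
  exact subsingleton_ext_of_retract X r (n + 1)

end Acyclic

end Bimodule

section RegularBimodule

variable (k : Type*) [CommRing k] {Λ : Type*} [Ring Λ] [Algebra k Λ]

variable (Λ) in
/-- The structure of a bimodule over itself on a `k`-algebra `Λ`. -/
@[reducible]
noncomputable def regularBimodule : Module (Λ ⊗[k] Λᵐᵒᵖ) Λ :=
  TensorProduct.Algebra.module

attribute [local instance] regularBimodule

@[simp]
lemma regularBimodule_tmul_smul (a : Λ) (b : Λᵐᵒᵖ) (x : Λ) :
    (a ⊗ₜ[k] b) • x = a * (x * b.unop) :=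
  TensorProduct.Algebra.smul_def a b x

end RegularBimodule

section Regular

variable (k : Type u) [CommRing k] {Λ : Type u} [Ring Λ] [Algebra k Λ]

attribute [local instance] moduleOverBase linearMapBimodule isScalarTower_moduleOverBase
  regularBimodule

instance projective_restrictScalars_regularBimodule :
    Projective ((ModuleCat.restrictScalars (rightScalars k Λ Λ)).obj (.of _ Λ)) := by
  let N := (ModuleCat.restrictScalars (rightScalars k Λ Λ)).obj (.of _ Λ)
  let unop : Λᵐᵒᵖ ≃+ N := MulOpposite.opAddEquiv.symm
  have unop_smul (b x : Λᵐᵒᵖ) : unop (b • x) = b • unop x :=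
    ((regularBimodule_tmul_smul k (1 : Λ) b x.unop).trans (one_mul _)).symm
  have : Module.Projective Λᵐᵒᵖ N :=
    .of_equiv ({ unop with map_smul' := unop_smul } : _ ≃ₗ[Λᵐᵒᵖ] N)
  exact (IsProjective.iff_projective N).1 this

variable (M : ModuleCat.{u} Λ)

/-- The bimodule map sending `a : Λ` to multiplication by `a` on `M`. -/
noncomputable def regularBimoduleToHom :
    ModuleCat.of (Λ ⊗[k] Λᵐᵒᵖ) Λ ⟶ (homBimodule k M).obj M :=
  ModuleCat.ofHom <| linearMapOfMapTmulSMul (Algebra.lsmul k k M : Λ →ₐ[k] _).toAddMonoidHom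
    fun a b x ↦ LinearMap.ext fun m ↦ by
      change ((a ⊗ₜ[k] b) • x) • m = a • x • b.unop • m
      rw [regularBimodule_tmul_smul, mul_smul, mul_smul]

lemma regularBimoduleToHom_universal (N : ModuleCat.{u} Λ) : Function.Bijective
    fun f : M ⟶ N ↦ regularBimoduleToHom k M ≫ (homBimodule k M).map f := by
  have apply_one (f : M ⟶ N) (m : M) :
      (show M →ₗ[k] N from (regularBimoduleToHom k M ≫ (homBimodule k M).map f) (1 : Λ)) m = f m :=
    congrArg f (one_smul Λ m)
  refine ⟨fun f g h ↦ ?_, fun φ ↦ ?_⟩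
  · ext m
    rw [← apply_one f, ← apply_one g]
    exact congr((show M →ₗ[k] N from $h (1 : Λ)) m)
  · let φ' (a : Λ) : M →ₗ[k] N := φ a
    have φ'_mul (a b : Λ) (m : M) : φ' (a * b) m = a • φ' 1 (b • m) := by
      have h := φ.hom.map_smul (a ⊗ₜ[k] .op b) (1 : Λ)
      rw [regularBimodule_tmul_smul, MulOpposite.unop_op, one_mul] at h
      exact DFunLike.congr_fun (F := M →ₗ[k] N) h m
    have φ'_one_smul (a : Λ) (m : M) : φ' 1 (a • m) = a • φ' 1 m := by
      simpa using (φ'_mul 1 a m).symm.trans (by simpa using φ'_mul a 1 m)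
    refine ⟨ModuleCat.ofHom { φ' 1 with map_smul' := φ'_one_smul }, ?_⟩
    ext (a : Λ)
    refine LinearMap.ext fun m ↦ ?_
    change φ' 1 (a • m) = φ' a m
    rw [φ'_one_smul, ← one_smul Λ m, ← φ'_mul, one_smul, mul_one]

variable {M}

lemma extMapPrecomp_regularBimoduleToHom_bijective [Module.Projective k Λ] [Module.Projective k M]
    (N : ModuleCat.{u} Λ) (n : ℕ) : Function.Bijective
      (extMapPrecomp (homBimodule k M) (regularBimoduleToHom k M) N n : Abelian.Ext.{u} M N n →
        Abelian.Ext.{u} _ _ n) :=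
  extMapPrecomp_bijective _ _ (regularBimoduleToHom_universal k M)
    (subsingleton_ext_homBimodule_of_injective k M _) N n

lemma subsingleton_ext_regularBimodule_homBimodule_iff [Module.Projective k Λ]
    [Module.Projective k M] (N : ModuleCat.{u} Λ) (n : ℕ) :
    Subsingleton (Abelian.Ext.{u} (.of (Λ ⊗[k] Λᵐᵒᵖ) Λ) ((homBimodule k M).obj N) n) ↔
      Subsingleton (Abelian.Ext.{u} M N n) :=
  (Equiv.ofBijective _ (extMapPrecomp_regularBimoduleToHom_bijective k N n)).subsingleton_congr.symm

end Regular

section Separable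

variable {k E : Type*} [CommRing k] [Ring E] [Algebra k E]

attribute [local instance] regularBimodule

lemma exists_separability_idempotent [Module.Projective (E ⊗[k] Eᵐᵒᵖ) E] :
    ∃ t : E ⊗[k] Eᵐᵒᵖ, t • (1 : E) = 1 ∧ ∀ b : E, (b ⊗ₜ 1) * t = (1 ⊗ₜ MulOpposite.op b) * t := by
  obtain ⟨s, hs⟩ := Module.projective_lifting_property
    (LinearMap.toSpanSingleton (E ⊗[k] Eᵐᵒᵖ) E 1) .id fun a ↦ ⟨a ⊗ₜ 1, by simp⟩
  refine ⟨s 1, by simpa using congr($hs 1), fun b ↦ ?_⟩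
  rw [← smul_eq_mul, ← smul_eq_mul, ← map_smul, ← map_smul]
  simp

variable {Λ : Type*} [Ring Λ] [Algebra k Λ] {Y : Type*} [AddCommGroup Y] [Module k Y]
  [Module (Λ ⊗[k] Eᵐᵒᵖ) Y] [IsScalarTower k (Λ ⊗[k] Eᵐᵒᵖ) Y]

variable (k E Λ Y)

/-- The right action of `E` on a `Λ`-`E`-bimodule `Y`. -/
noncomputable def rightAction : Eᵐᵒᵖ →ₗ[k] Y →ₗ[k] Y :=
  (Algebra.lsmul k k Y : Λ ⊗[k] Eᵐᵒᵖ →ₐ[k] _).toLinearMap ∘ₗ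
    Algebra.TensorProduct.includeRight.toLinearMap

/-- The map sending `y` to `e ↦ y e`, for a `Λ`-`E`-bimodule `Y`. -/
noncomputable def rightMulHom : Y →ₗ[k] E →ₗ[k] Y :=
  (rightAction k E Λ Y ∘ₗ (MulOpposite.opLinearEquiv k).toLinearMap).flip

/-- The map sending `φ` to `e ⊗ b ↦ φ(e) b`, for a `Λ`-`E`-bimodule `Y`. -/
noncomputable def tensorEval : (E →ₗ[k] Y) →ₗ[k] E ⊗[k] Eᵐᵒᵖ →ₗ[k] Y :=
  (TensorProduct.lift.equiv (.id k) E Eᵐᵒᵖ Y).toLinearMap ∘ₗ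
    (rightAction k E Λ Y).flip.compRight k

variable {k E Λ Y}

@[simp]
lemma rightMulHom_apply (y : Y) (e : E) :
    rightMulHom k E Λ Y y e = ((1 : Λ) ⊗ₜ[k] MulOpposite.op e) • y := rfl

@[simp]
lemma tensorEval_tmul (φ : E →ₗ[k] Y) (e : E) (b : Eᵐᵒᵖ) :
    tensorEval k E Λ Y φ (e ⊗ₜ b) = ((1 : Λ) ⊗ₜ[k] b) • φ e := rfl

lemma tensorEval_rightMulHom (y : Y) (t : E ⊗[k] Eᵐᵒᵖ) :
    tensorEval k E Λ Y (rightMulHom k E Λ Y y) t =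
      ((1 : Λ) ⊗ₜ[k] MulOpposite.op (t • (1 : E))) • y := by
  induction t with
  | zero =>
    simp only [map_zero, zero_smul (E ⊗[k] Eᵐᵒᵖ) (1 : E), MulOpposite.op_zero,
      TensorProduct.tmul_zero]
    exact (zero_smul (Λ ⊗[k] Eᵐᵒᵖ) y).symm
  | tmul e b => simp [smul_smul]
  | add s t hs ht => simp [add_smul, TensorProduct.tmul_add, hs, ht]

lemma tensorEval_eq_tmul_smul {t : E ⊗[k] Eᵐᵒᵖ} {b : E}
    (ht : (b ⊗ₜ 1) * t = (1 ⊗ₜ MulOpposite.op b) * t) (a : Λ) {φ ψ : E →ₗ[k] Y}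
    (hψ : ∀ e, ψ e = (a ⊗ₜ[k] (1 : Eᵐᵒᵖ)) • φ (b * e)) :
    tensorEval k E Λ Y ψ t = (a ⊗ₜ[k] MulOpposite.op b) • tensorEval k E Λ Y φ t := by
  have left_mul (t) : tensorEval k E Λ Y ψ t =
      (a ⊗ₜ[k] (1 : Eᵐᵒᵖ)) • tensorEval k E Λ Y φ ((b ⊗ₜ 1) * t) := by
    induction t with
    | zero => simp
    | tmul e c => simp [hψ, smul_smul]
    | add s t hs ht => simp [mul_add, hs, ht]
  have right_mul (t) : tensorEval k E Λ Y φ ((1 ⊗ₜ MulOpposite.op b) * t) =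
      ((1 : Λ) ⊗ₜ[k] MulOpposite.op b) • tensorEval k E Λ Y φ t := by
    induction t with
    | zero => simp
    | tmul e c => simp [smul_smul]
    | add s t hs ht => simp [mul_add, hs, ht]
  rw [left_mul, ht, right_mul, smul_smul, Algebra.TensorProduct.tmul_mul_tmul, mul_one, one_mul]

end Separable

section SeparableRetract

variable {k E : Type u} [CommRing k] [Ring E] [Algebra k E]
variable {Λ : Type u} [Ring Λ] [Algebra k Λ]

attribute [local instance] moduleOverBase linearMapBimodule isScalarTower_moduleOverBase
  regularBimodule

/-- The left `Λ`-module underlying a `Λ`-`E`-bimodule. -/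
noncomputable abbrev leftModule (Y : ModuleCat.{u} (Λ ⊗[k] Eᵐᵒᵖ)) : ModuleCat.{u} Λ :=
  (ModuleCat.restrictScalars Algebra.TensorProduct.includeLeftRingHom).obj Y

variable (f : Λ →ₐ[k] E)

/-- The `k`-algebra `E` as a left `Λ`-module along `f : Λ → E`. -/
noncomputable abbrev algebraAsModule : ModuleCat.{u} Λ :=
  (ModuleCat.restrictScalars f.toRingHom).obj (.of E E)

/-- The identity of `E`, as a map between two presentations of its `k`-module structure. -/
noncomputable def algebraAsModuleEquiv : E ≃ₗ[k] algebraAsModule f where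
  __ := AddEquiv.refl E
  map_smul' c e := by
    refine (Algebra.smul_def c e).trans ?_
    rw [← f.commutes]
    rfl

/-- The algebra map along which a `Λ`-`E`-bimodule becomes a `Λ`-bimodule. -/
noncomputable abbrev enlargeRightScalars : Λ ⊗[k] Λᵐᵒᵖ →+* Λ ⊗[k] Eᵐᵒᵖ :=
  (Algebra.TensorProduct.map (AlgHom.id k Λ) (AlgHom.op f)).toRingHom

lemma exists_retract_homBimodule [Module.Projective (E ⊗[k] Eᵐᵒᵖ) E]
    (Y : ModuleCat.{u} (Λ ⊗[k] Eᵐᵒᵖ)) :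
    Nonempty (Retract ((ModuleCat.restrictScalars (enlargeRightScalars f)).obj Y)
      ((homBimodule k (algebraAsModule f)).obj (leftModule Y))) := by
  obtain ⟨t, t_smul_one, ht⟩ := exists_separability_idempotent (k := k) (E := E)
  let ε : (E →ₗ[k] Y) ≃+ (algebraAsModule f →ₗ[k] leftModule Y) :=
    (algebraAsModuleEquiv f).arrowCongrAddEquiv (.refl k Y)
  let i : Y →+ (algebraAsModule f →ₗ[k] leftModule Y) :=
    ε.toAddMonoidHom.comp (rightMulHom k E Λ Y).toAddMonoidHom
  let r : (algebraAsModule f →ₗ[k] leftModule Y) →+ Y :=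
    (LinearMap.applyₗ t ∘ₗ tensorEval k E Λ Y).toAddMonoidHom.comp ε.symm.toAddMonoidHom
  let Z := (ModuleCat.restrictScalars (enlargeRightScalars f)).obj Y
  have i_smul (a : Λ) (b : Λᵐᵒᵖ) (y : Z) : i ((a ⊗ₜ[k] b) • y : Z) = (a ⊗ₜ[k] b) • i y := by
    refine LinearMap.ext fun (e : E) ↦ ?_
    change ((1 : Λ) ⊗ₜ[k] MulOpposite.op e) • (a ⊗ₜ[k] MulOpposite.op (f b.unop)) • (y : Y) =
      (a ⊗ₜ[k] (1 : Eᵐᵒᵖ)) • ((1 : Λ) ⊗ₜ[k] MulOpposite.op (f b.unop * e)) • (y : Y)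
    simp [smul_smul]
  have r_smul (a : Λ) (b : Λᵐᵒᵖ) (φ) : r ((a ⊗ₜ[k] b) • φ) =
      (a ⊗ₜ[k] MulOpposite.op (f b.unop)) • r φ :=
    tensorEval_eq_tmul_smul (ht (f b.unop)) a (φ := ε.symm φ) fun e ↦ rfl
  exact ⟨{
    i := ModuleCat.ofHom (X := Z) (linearMapOfMapTmulSMul (X := Z) i i_smul)
    r := ModuleCat.ofHom (Y := Z) (linearMapOfMapTmulSMul (Y := Z) r r_smul)
    retract := by
      ext (y : Y)
      refine (tensorEval_rightMulHom y t).trans ?_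
      rw [t_smul_one]
      exact one_smul _ y }⟩

end SeparableRetract

section NilpotentKernel

variable {R S : Type u} [Ring R] [Ring S] {g : R →+* S}

lemma exists_iso_restrictScalars_of_ker_le_annihilator (hg : Function.Surjective g)
    (X : ModuleCat.{u} R) (hX : RingHom.ker g ≤ Module.annihilator R X) :
    ∃ Y : ModuleCat.{u} S, Nonempty (X ≅ (ModuleCat.restrictScalars g).obj Y) := by
  have ker_le : RingHom.ker g ≤ RingHom.ker (Module.toAddMonoidEnd R X) := hX
  let action : S →+* AddMonoid.End X := RingHom.liftOfSurjective g hg ⟨_, ker_le⟩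
  let _ : Module S X := Module.compHom X action
  let Y := (ModuleCat.restrictScalars g).obj (.of S X)
  let e : X ≃ₗ[R] Y :=
    { AddEquiv.refl X with
      map_smul' r x := (DFunLike.congr_fun
        (RingHom.liftOfRightInverse_comp_apply g _ (Function.rightInverse_surjInv hg)
          ⟨_, ker_le⟩ r) x).symm }
  exact ⟨.of S X, ⟨e.toModuleIso⟩⟩

lemma subsingleton_ext_of_ker_le_annihilator (hg : Function.Surjective g) (Z : ModuleCat.{u} R)
    (n : ℕ) (h : ∀ Y : ModuleCat.{u} S,
      Subsingleton (Abelian.Ext.{u} Z ((ModuleCat.restrictScalars g).obj Y) n))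
    (X : ModuleCat.{u} R) (hX : RingHom.ker g ≤ Module.annihilator R X) :
    Subsingleton (Abelian.Ext.{u} Z X n) := by
  obtain ⟨Y, ⟨e⟩⟩ := exists_iso_restrictScalars_of_ker_le_annihilator hg X hX
  have := h Y
  exact subsingleton_ext_of_retract Z (.ofIso e) n

lemma shortExact_subtype_mkQ {X : Type u} [AddCommGroup X] [Module R X] (N : Submodule R X) :
    (ShortComplex.mk (ModuleCat.ofHom N.subtype) (ModuleCat.ofHom N.mkQ)
      (by ext; simp)).ShortExact where
  exact := (ShortComplex.ShortExact.moduleCat_exact_iff_function_exact _).2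
    (LinearMap.exact_subtype_mkQ N)
  mono_f := (ModuleCat.mono_iff_injective _).2 N.injective_subtype
  epi_g := (ModuleCat.epi_iff_surjective _).2 N.mkQ_surjective

lemma subsingleton_ext_of_isNilpotent_ker (hg : Function.Surjective g)
    (nilpotent : IsNilpotent (RingHom.ker g)) (Z : ModuleCat.{u} R) (n : ℕ)
    (h : ∀ Y : ModuleCat.{u} S,
      Subsingleton (Abelian.Ext.{u} Z ((ModuleCat.restrictScalars g).obj Y) n))
    (X : ModuleCat.{u} R) : Subsingleton (Abelian.Ext.{u} Z X n) := by
  have of_pow_le_annihilator (i : ℕ) : ∀ X : ModuleCat.{u} R,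
      RingHom.ker g ^ i ≤ Module.annihilator R X → Subsingleton (Abelian.Ext.{u} Z X n) := by
    induction i with
    | zero =>
      rw [Submodule.pow_zero, Ideal.one_eq_top]
      exact fun X hX ↦ subsingleton_ext_of_ker_le_annihilator hg Z n h X (le_top.trans hX)
    | succ i hi =>
      intro X hX
      let N : Submodule R X := RingHom.ker g • ⊤
      have : Subsingleton (Abelian.Ext.{u} Z (.of R N) n) := by
        refine hi _ (Submodule.le_annihilator_iff.2 ?_)
        rw [← Submodule.annihilator_top, Submodule.le_annihilator_iff, Submodule.pow_succ,
          ← smul_eq_mul, Submodule.smul_assoc] at hX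
        exact hX
      have : Subsingleton (Abelian.Ext.{u} Z (.of R (X ⧸ N)) n) := by
        refine subsingleton_ext_of_ker_le_annihilator hg Z n h _ fun j hj ↦ ?_
        refine Module.mem_annihilator.2 fun x ↦ ?_
        obtain ⟨x, rfl⟩ := N.mkQ_surjective x
        exact (Submodule.Quotient.mk_eq_zero N).2 (Submodule.smul_mem_smul hj trivial)
      exact subsingleton_ext_of_shortExact Z (shortExact_subtype_mkQ N) n
  obtain ⟨i, hi⟩ := nilpotent
  exact of_pow_le_annihilator i X (hi.trans_le bot_le)

end NilpotentKernel

section NilpotentTensor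

variable {k A B C : Type*} [CommRing k] [Ring A] [Algebra k A] [Ring B] [Algebra k B]

variable (A) in
lemma map_includeRight_mul_le (I J : Ideal B) :
    I.map (Algebra.TensorProduct.includeRight : B →ₐ[k] A ⊗[k] B) *
        J.map (Algebra.TensorProduct.includeRight : B →ₐ[k] A ⊗[k] B) ≤
      (I * J).map (Algebra.TensorProduct.includeRight : B →ₐ[k] A ⊗[k] B) := by
  have mem_map {K : Ideal B} {x : A ⊗[k] B} :
      x ∈ K.map (Algebra.TensorProduct.includeRight : B →ₐ[k] A ⊗[k] B) ↔
        x ∈ LinearMap.range (LinearMap.lTensor A (Submodule.restrictScalars k K).subtype) := by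
    rw [← Ideal.map_includeRight_eq]; rfl
  rw [Ideal.mul_le]
  intro x hx y hy
  obtain ⟨x, rfl⟩ := mem_map.1 hx
  obtain ⟨y, rfl⟩ := mem_map.1 hy
  clear hx hy
  induction x with
  | zero => simp
  | add x x' hx hx' => simpa only [map_add, add_mul] using add_mem hx hx'
  | tmul a i =>
    induction y with
    | zero => simp
    | add y y' hy hy' => simpa only [map_add, mul_add] using add_mem hy hy'
    | tmul a' j =>
      let ij : (I * J).restrictScalars k := ⟨i * j, Ideal.mul_mem_mul i.2 j.2⟩
      exact mem_map.2 ⟨(a * a') ⊗ₜ ij, (Algebra.TensorProduct.tmul_mul_tmul ..).symm⟩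

lemma isNilpotent_map_includeRight {I : Ideal B} (hI : IsNilpotent I) :
    IsNilpotent (I.map (Algebra.TensorProduct.includeRight : B →ₐ[k] A ⊗[k] B)) := by
  have pow_le (n : ℕ) : I.map (Algebra.TensorProduct.includeRight : B →ₐ[k] A ⊗[k] B) ^ n ≤
      (I ^ n).map (Algebra.TensorProduct.includeRight : B →ₐ[k] A ⊗[k] B) := by
    induction n with
    | zero => simp [Submodule.pow_zero, Ideal.one_eq_top, Ideal.map_top]
    | succ n hn =>
      rw [Submodule.pow_succ, Submodule.pow_succ]
      exact (Ideal.mul_mono_left hn).trans (map_includeRight_mul_le A _ _)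
  obtain ⟨n, hn⟩ := hI
  refine ⟨n, ?_⟩
  simpa [hn] using pow_le n

variable [Ring C] [Algebra k C]

lemma isNilpotent_ker_op {f : B →ₐ[k] C} (hf : IsNilpotent (RingHom.ker f)) :
    IsNilpotent (RingHom.ker (AlgHom.op f)) := by
  have unop_mem_pow (n : ℕ) : ∀ x ∈ RingHom.ker (AlgHom.op f) ^ n, x.unop ∈ RingHom.ker f ^ n := by
    induction n with
    | zero => simp [Submodule.pow_zero, Ideal.one_eq_top]
    | succ n hn =>
      intro x hx
      rw [Submodule.pow_succ] at hx
      rw [Ideal.IsTwoSided.pow_succ]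
      refine Submodule.smul_induction_on hx (fun r hr s hs ↦ ?_) fun x y ↦ add_mem
      exact Ideal.mul_mem_mul (MulOpposite.op_injective hs) (hn r hr)
  obtain ⟨n, hn⟩ := hf
  refine ⟨n, eq_bot_iff.2 fun x hx ↦ MulOpposite.unop_injective ?_⟩
  simpa [hn] using unop_mem_pow n x hx

end NilpotentTensor

section Equivalence

variable {k : Type u} [CommRing k] {Λ : Type u} [Ring Λ] [Algebra k Λ]
  {E : Type u} [Ring E] [Algebra k E]

attribute [local instance] moduleOverBase linearMapBimodule isScalarTower_moduleOverBase
  regularBimodule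

lemma enlargeRightScalars_surjective {f : Λ →ₐ[k] E} (hf : Function.Surjective f) :
    Function.Surjective (enlargeRightScalars f) :=
  Algebra.TensorProduct.map_surjective (AlgHom.id k Λ) _ Function.surjective_id
    (MulOpposite.op_surjective.comp (hf.comp MulOpposite.unop_surjective))

lemma isNilpotent_ker_enlargeRightScalars {f : Λ →ₐ[k] E} (hf : Function.Surjective f)
    (nilpotent : IsNilpotent (RingHom.ker f)) :
    IsNilpotent (RingHom.ker (enlargeRightScalars f)) := by
  have op_surjective : Function.Surjective (AlgHom.op f) :=
    MulOpposite.op_surjective.comp (hf.comp MulOpposite.unop_surjective)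
  have ker_eq := Algebra.TensorProduct.lTensor_ker (A := Λ) (AlgHom.op f) op_surjective
  exact ker_eq ▸ isNilpotent_map_includeRight (A := Λ) (isNilpotent_ker_op nilpotent)

lemma subsingleton_ext_regularBimodule [Module.Projective k Λ] [Module.Projective k E]
    [Module.Projective (E ⊗[k] Eᵐᵒᵖ) E] {f : Λ →ₐ[k] E} (hf : Function.Surjective f)
    (nilpotent : IsNilpotent (RingHom.ker f)) (n : ℕ)
    (h : ∀ N : ModuleCat.{u} Λ, Subsingleton (Abelian.Ext.{u} (algebraAsModule f) N n))
    (X : ModuleCat.{u} (Λ ⊗[k] Λᵐᵒᵖ)) :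
    Subsingleton (Abelian.Ext.{u} (ModuleCat.of (Λ ⊗[k] Λᵐᵒᵖ) Λ) X n) := by
  refine subsingleton_ext_of_isNilpotent_ker (enlargeRightScalars_surjective hf)
    (isNilpotent_ker_enlargeRightScalars hf nilpotent) _ n (fun Y ↦ ?_) X
  obtain ⟨r⟩ := exists_retract_homBimodule f Y
  have : Module.Projective k (algebraAsModule f) := .of_equiv (algebraAsModuleEquiv f)
  have := (subsingleton_ext_regularBimodule_homBimodule_iff k (leftModule Y) n).2 (h _)
  exact subsingleton_ext_of_retract _ r n

end Equivalence

theorem stmt_1_general (k : Type u) [Field k] (Λ : Type u) [Ring Λ] [Algebra k Λ]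
    (E : Type u) [Ring E] [Algebra k E] (f : Λ →ₐ[k] E)
    (hsurj : Function.Surjective f) (nilpotent : IsNilpotent (RingHom.ker f))
    (hsep : @Module.Projective (E ⊗[k] Eᵐᵒᵖ) _ E _ (TensorProduct.Algebra.module))
    (n : ℕ) :
    (∀ (M N : ModuleCat.{u} Λ) (m : ℕ), n < m →
        Subsingleton (((Ext k (ModuleCat.{u} Λ) m).obj (Opposite.op M)).obj N)) ↔
    (∀ (X : ModuleCat.{u} (Λ ⊗[k] Λᵐᵒᵖ)) (m : ℕ), n < m →
        Subsingleton (((Ext k (ModuleCat.{u} (Λ ⊗[k] Λᵐᵒᵖ)) m).obj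
          (Opposite.op (@ModuleCat.of (Λ ⊗[k] Λᵐᵒᵖ) _ Λ _ (envModuleSelf k Λ)))).obj X)) := by
  constructor
  · intro ha X m hm
    obtain ⟨m, rfl⟩ := Nat.exists_eq_add_one_of_ne_zero (Nat.ne_zero_of_lt hm)
    refine (subsingleton_ext_iff_subsingleton_abelianExt k _ X m).2 ?_
    exact subsingleton_ext_regularBimodule hsurj nilpotent (m + 1)
      (fun N ↦ (subsingleton_ext_iff_subsingleton_abelianExt k _ N m).1 (ha _ N _ hm)) X
  · intro hb M N m hm
    obtain ⟨m, rfl⟩ := Nat.exists_eq_add_one_of_ne_zero (Nat.ne_zero_of_lt hm)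
    let _ := moduleOverBase k M
    refine (subsingleton_ext_iff_subsingleton_abelianExt k M N m).2 ?_
    exact (subsingleton_ext_regularBimodule_homBimodule_iff k N (m + 1)).1
      ((subsingleton_ext_iff_subsingleton_abelianExt k _ _ m).1 (hb _ _ hm))

theorem stmt_1 (k : Type u) [Field k] (Λ : Type u) [Ring Λ] [Algebra k Λ]
    [FiniteDimensional k Λ]
    -- `Λ/rad(Λ)` is a separable `k`-algebra:
    (E : Type u) [Ring E] [Algebra k E] (f : Λ →ₐ[k] E)
    (hsurj : Function.Surjective f)
    (hker : RingHom.ker f = Ideal.jacobson (⊥ : Ideal Λ))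
    (hsep : @Module.Projective (E ⊗[k] Eᵐᵒᵖ) _ E _ (TensorProduct.Algebra.module))
    (n : ℕ) :
    -- (a) the global dimension of `Λ` is at most `n`
    (∀ (M N : ModuleCat.{u} Λ) (m : ℕ), n < m →
        Subsingleton (((Ext k (ModuleCat.{u} Λ) m).obj (Opposite.op M)).obj N)) ↔
    -- (b) the projective dimension of `Λ` as a `Λ`-bimodule is at most `n`
    (∀ (X : ModuleCat.{u} (Λ ⊗[k] Λᵐᵒᵖ)) (m : ℕ), n < m →
        Subsingleton (((Ext k (ModuleCat.{u} (Λ ⊗[k] Λᵐᵒᵖ)) m).obj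
          (Opposite.op (@ModuleCat.of (Λ ⊗[k] Λᵐᵒᵖ) _ Λ _ (envModuleSelf k Λ)))).obj X)) := by
  have : IsArtinianRing Λ := IsArtinianRing.of_finite k Λ
  have nilpotent : IsNilpotent (RingHom.ker f) :=
    hker ▸ Ideal.jacobson_bot (R := Λ) ▸ IsSemiprimaryRing.isNilpotent
  exact stmt_1_general k Λ E f hsurj nilpotent hsep n
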